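/- Let $t\ge 3$ be an integer. A family $\mathcal F$ of subsets of a finite set is $s$-cover-free if $A_0\not\subseteq A_1\cup\dots\cup A_s$ for any $s+1$ distinct members $A_0,A_1,\dots,A_s$ of $\mathcal F$. A binary code $C\subseteq\{0,1\}^N$ is $t$-frameproof if $\mathrm{desc}(D)\cap C=D$ for every $D\subseteq C$ with $|D|\le t$, where $\mathrm{desc}(D)=\{x\in\{0,1\}^N: x_i\in\{c_i:c\in D\}\text{ for all }i\}$. To exclude trivial cases, $s$-cover-free families are understood to have at least $s+1$ members and $t$-frameproof codes at least $t+1$ codewords. Let $N^*(s)$ denote the minimal $N$ such that there exists an $s$-cover-free family of more than $N$ subsets of an $N$-element set, and let $N(t)$ denote the minimal $N$ such that there exists a binary $t$-frameproof code of length $N$ with more than $N$ codewords. Then $N^*(t-2)$, $N(t)$ and $N^*(t)$ exist, and $N^*(t-2)\le N(t)\le N^*(t)$. -/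

import Mathlib

/-- The descendant set of a set `D` of words: all words `x` such that in every
coordinate `i`, the symbol `x i` appears as the `i`-th symbol of some word of `D`. -/
def descSet {N q : ℕ} (D : Finset (Fin N → Fin q)) : Set (Fin N → Fin q) :=
  {x | ∀ i : Fin N, ∃ c ∈ D, x i = c i}

/-- `C` is a `t`-frameproof code: for every `D ⊆ C` with `|D| ≤ t`, `desc(D) ∩ C = D`. -/
def IsFrameproof {N q : ℕ} (t : ℕ) (C : Finset (Fin N → Fin q)) : Prop :=
  ∀ D : Finset (Fin N → Fin q), D ⊆ C → D.card ≤ t →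
    descSet D ∩ (C : Set (Fin N → Fin q)) = (D : Set (Fin N → Fin q))

/-- A family `F` of finite sets is `t`-cover-free: for any `t + 1` distinct members
`A₀, A₁, …, A_t` (here `T = {A₁, …, A_t}`), `A₀` is not contained in `A₁ ∪ ⋯ ∪ A_t`. -/
def IsCoverFree {α : Type*} [DecidableEq α] (t : ℕ) (F : Finset (Finset α)) : Prop :=
  ∀ A₀ ∈ F, ∀ T ⊆ F.erase A₀, T.card = t → ¬ A₀ ⊆ T.sup id

/-- The sizes `N` of a ground set that carries an `s`-cover-free family of more than `N` members.
As usual the family is understood to be nontrivial, i.e. to have at least `s + 1` members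
(with at most `s` members, the defining condition is vacuous). -/
def coverFreeLengths (s : ℕ) : Set ℕ :=
  {N | ∃ F : Finset (Finset (Fin N)), IsCoverFree s F ∧ s < F.card ∧ N < F.card}

/-- The lengths `N` of binary `t`-frameproof codes with more than `N` codewords. As usual the code
is understood to be nontrivial, i.e. to have at least `t + 1` codewords; for `t ≥ 2` this excludes
only the code `{0, 1}` of length `1`. -/
def frameproofLengths (t : ℕ) : Set ℕ :=
  {N | ∃ C : Finset (Fin N → Fin 2), IsFrameproof t C ∧ t < C.card ∧ N < C.card}

/-- `N*(s)`: the minimal `N` such that there is an `s`-cover-free family of more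
than `N` subsets of an `N`-element set. -/
noncomputable def Nstar (s : ℕ) : ℕ := sInf (coverFreeLengths s)

/-- `N(t)`: the minimal `N` such that there is a binary `t`-frameproof code of
length `N` with more than `N` codewords. -/
noncomputable def Nfp (t : ℕ) : ℕ := sInf (frameproofLengths t)

/-- An indexed family of more than `card α` subsets of `α`, none of them covered by at most `s`
others, gives a cover-free family on `Fin (card α)`. -/
theorem card_mem_coverFreeLengths {α ι : Type*} [Fintype α] [DecidableEq α] [DecidableEq ι]
    {s : ℕ} (hs : 1 ≤ s) (I : Finset ι) (A : ι → Finset α)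
    (hA : ∀ x ∈ I, ∀ D ⊆ I.erase x, D.card ≤ s → ¬ A x ⊆ D.biUnion A)
    (hsI : s < I.card) (hαI : Fintype.card α < I.card) :
    Fintype.card α ∈ coverFreeLengths s := by
  let e := Fintype.equivFin α
  let B : ι → Finset (Fin (Fintype.card α)) := fun i => (A i).map e.toEmbedding
  have hinj : Set.InjOn B I := by
    intro x hx y hy hxy
    by_contra hne
    refine hA x hx {y} ?_ (by simpa using hs) ?_
    · simpa using ⟨Ne.symm hne, hy⟩
    · have : A x = A y := Finset.map_injective _ hxy
      simp [this]
  have hcard : (I.image B).card = I.card := Finset.card_image_of_injOn hinj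
  refine ⟨I.image B, ?_, by rwa [hcard], by rwa [hcard]⟩
  intro A₀ hA₀ T hT hTs hcov
  obtain ⟨x, hx, rfl⟩ := Finset.mem_image.mp hA₀
  refine hA x hx (I.filter fun i => B i ∈ T) ?_ ?_ ?_
  · intro i hi
    rw [Finset.mem_filter] at hi
    refine Finset.mem_erase.mpr ⟨?_, hi.1⟩
    rintro rfl
    exact Finset.notMem_erase _ _ (hT hi.2)
  · rw [← hTs]
    refine Finset.card_le_card_of_injOn B (fun i hi => ?_) (hinj.mono fun i hi => ?_)
    · exact (Finset.mem_filter.mp hi).2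
    · exact (Finset.mem_filter.mp hi).1
  · intro a ha
    have h1 : e a ∈ T.sup id := hcov (Finset.mem_map_of_mem e.toEmbedding ha)
    obtain ⟨S, hS, haS⟩ := Finset.mem_sup.mp h1
    obtain ⟨y, hy, rfl⟩ := Finset.mem_image.mp (Finset.mem_of_mem_erase (hT hS))
    refine Finset.mem_biUnion.mpr ⟨y, Finset.mem_filter.mpr ⟨hy, hS⟩, ?_⟩
    obtain ⟨b, hb, hbe⟩ := Finset.mem_map.mp haS
    rwa [← e.injective hbe]

/-- Two distinct quadratic functions over a field agree in at most two points. -/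
theorem card_quadratic_agree_le_two {K : Type*} [Field K] [Fintype K] [DecidableEq K]
    {u v : K × K × K} (h : u ≠ v) :
    (Finset.univ.filter fun x : K =>
      u.1 + u.2.1 * x + u.2.2 * x ^ 2 = v.1 + v.2.1 * x + v.2.2 * x ^ 2).card ≤ 2 := by
  open Polynomial in
  let P : K[X] := C (u.2.2 - v.2.2) * X ^ 2 + C (u.2.1 - v.2.1) * X + C (u.1 - v.1)
  have hP : P ≠ 0 := by
    intro h0
    apply h
    have h2 := congrArg (fun Q => Polynomial.coeff Q 2) h0
    have h1 := congrArg (fun Q => Polynomial.coeff Q 1) h0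
    have h00 := congrArg (fun Q => Polynomial.coeff Q 0) h0
    simp [P, Polynomial.coeff_X, Polynomial.coeff_C, -map_sub] at h2 h1 h00
    exact Prod.ext (sub_eq_zero.mp h00)
      (Prod.ext (sub_eq_zero.mp h1) (sub_eq_zero.mp h2))
  refine (Polynomial.card_le_degree_of_subset_roots (p := P) ?_).trans
    Polynomial.natDegree_quadratic_le
  intro x hx
  have hx' : u.1 + u.2.1 * x + u.2.2 * x ^ 2 = v.1 + v.2.1 * x + v.2.2 * x ^ 2 := by
    simpa using hx
  rw [Polynomial.mem_roots hP, Polynomial.IsRoot.def]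
  simp only [P, Polynomial.eval_add, Polynomial.eval_mul, Polynomial.eval_C,
    Polynomial.eval_pow, Polynomial.eval_X]
  linear_combination hx'

/-- The graphs of the quadratic functions over a prime field with more than `2 * s` elements
form an `s`-cover-free family. -/
theorem coverFreeLengths_nonempty {s : ℕ} (hs : 1 ≤ s) : (coverFreeLengths s).Nonempty := by
  obtain ⟨p, hp, hpp⟩ := Nat.exists_infinite_primes (2 * s + 1)
  have : Fact p.Prime := ⟨hpp⟩
  let f : ZMod p × ZMod p × ZMod p → ZMod p → ZMod p :=
    fun u x => u.1 + u.2.1 * x + u.2.2 * x ^ 2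
  have hcard : (Finset.univ : Finset (ZMod p × ZMod p × ZMod p)).card = p * (p * p) := by
    simp [ZMod.card]
  refine ⟨_, card_mem_coverFreeLengths (α := ZMod p × ZMod p) hs Finset.univ
    (fun u => Finset.univ.image fun x => (x, f u x)) ?_ ?_ ?_⟩
  · intro u _ D hD hDs hcov
    have hsub : (Finset.univ : Finset (ZMod p)) ⊆
        D.biUnion fun v => Finset.univ.filter fun x => f u x = f v x := by
      intro x _
      have hx := hcov (Finset.mem_image_of_mem (fun x => (x, f u x)) (Finset.mem_univ x))
      obtain ⟨v, hv, hxv⟩ := Finset.mem_biUnion.mp hx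
      obtain ⟨y, -, hy⟩ := Finset.mem_image.mp hxv
      obtain ⟨rfl, hy⟩ := Prod.mk.inj hy
      exact Finset.mem_biUnion.mpr ⟨v, hv, by simp [hy]⟩
    have h1 := Finset.card_le_card hsub
    have h2 := Finset.card_biUnion_le_card_mul D
      (fun v => Finset.univ.filter fun x => f u x = f v x) 2
      (fun v hv => card_quadratic_agree_le_two (Finset.ne_of_mem_erase (hD hv)).symm)
    rw [Finset.card_univ, ZMod.card] at h1
    omega
  · rw [hcard]
    nlinarith [hpp.two_le, Nat.mul_le_mul hpp.two_le hpp.two_le]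
  · rw [hcard, Fintype.card_prod, ZMod.card]
    nlinarith [hpp.two_le, Nat.mul_le_mul hpp.two_le hpp.two_le]

/-- The characteristic vectors of a `t`-cover-free family form a `t`-frameproof code. -/
theorem coverFreeLengths_subset_frameproofLengths (t : ℕ) :
    coverFreeLengths t ⊆ frameproofLengths t := by
  rintro N ⟨F, hF, htF, hNF⟩
  let χ : Finset (Fin N) → Fin N → Fin 2 := fun A i => if i ∈ A then 1 else 0
  have hχ : Function.Injective χ := by
    intro A B h
    ext i
    have := congrFun h i
    by_cases hA : i ∈ A <;> by_cases hB : i ∈ B <;> simp_all [χ]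
  have hcard : (F.image χ).card = F.card := Finset.card_image_of_injective F hχ
  refine ⟨F.image χ, ?_, by rwa [hcard], by rwa [hcard]⟩
  intro D hD hDt
  refine Set.Subset.antisymm ?_ fun x hx => ⟨fun i => ⟨x, hx, rfl⟩, hD hx⟩
  rintro x ⟨hxD, hxF⟩
  obtain ⟨A, hA, rfl⟩ := Finset.mem_image.mp hxF
  by_contra hAD
  obtain ⟨G, hG, rfl⟩ := Finset.subset_image_iff.mp hD
  rw [Finset.card_image_of_injective G hχ] at hDt
  have hGA : G ⊆ F.erase A := fun B hB => Finset.mem_erase.mpr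
    ⟨fun h => hAD (h ▸ Finset.mem_image_of_mem χ hB), hG hB⟩
  obtain ⟨T, hGT, hTF, hT⟩ := Finset.exists_subsuperset_card_eq hGA hDt
    (by rw [Finset.card_erase_of_mem hA]; omega)
  refine hF A hA T hTF hT fun i hi => ?_
  obtain ⟨c, hc, hic⟩ := hxD i
  obtain ⟨B, hB, rfl⟩ := Finset.mem_image.mp hc
  refine Finset.mem_sup.mpr ⟨B, hGT hB, ?_⟩
  by_contra hiB
  have hiB' : i ∉ B := hiB
  simp [χ, hi, hiB'] at hic

/-- Among any three binary words, two differ in at least two coordinates. -/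
theorem exists_two_le_card_ne {N : ℕ} {C : Finset (Fin N → Fin 2)} (hC : 2 < C.card) :
    ∃ a ∈ C, ∃ b ∈ C, 2 ≤ (Finset.univ.filter fun i => a i ≠ b i).card := by
  obtain ⟨a, b, c, ha, hb, hc, hab, hac, hbc⟩ := Finset.two_lt_card_iff.mp hC
  by_contra! h
  obtain ⟨i, hi⟩ := Function.ne_iff.mp hab
  obtain ⟨j, hj⟩ := Function.ne_iff.mp hac
  have uniq : ∀ u ∈ C, ∀ v ∈ C, ∀ k l, u k ≠ v k → u l ≠ v l → k = l := by
    intro u hu v hv k l hk hl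
    exact Finset.card_le_one.mp (Nat.le_of_lt_succ (h u hu v hv)) k (by simpa using hk) l
      (by simpa using hl)
  apply hbc
  funext k
  by_contra hk
  by_cases hbk : a k = b k
  · have hck : a k ≠ c k := fun h' => hk (hbk.symm.trans h')
    have hjk := uniq a ha c hc j k hj hck
    have hik : i ≠ k := fun h' => hi (h' ▸ hbk)
    have hci : a i = c i := by
      by_contra h'
      exact hik (uniq a ha c hc i k h' hck)
    exact hik (uniq b hb c hc i k (fun h' => hi (hci.trans h'.symm)) hk)
  · by_cases hck : a k = c k
    · have hjk : j ≠ k := fun h' => hj (h' ▸ hck)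
      have hbj : a j = b j := by
        by_contra h'
        exact hjk (uniq a ha b hb j k h' hbk)
      exact hjk (uniq b hb c hc j k (fun h' => hj (hbj.trans h')) hk)
    · omega

/-- A binary `t`-frameproof code of length `N` with more than `N` words gives a
`(t - 2)`-cover-free family: compare all other words with one of two words at distance at least
two, outside of the coordinates where these two words differ. -/
theorem exists_mem_coverFreeLengths_le {t N : ℕ} (ht : 3 ≤ t) (hN : N ∈ frameproofLengths t) :
    ∃ M ∈ coverFreeLengths (t - 2), M ≤ N := by
  obtain ⟨C, hC, htC, hNC⟩ := hN
  obtain ⟨a, ha, b, hb, hab⟩ := exists_two_le_card_ne (C := C) (by omega)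
  have hne : b ≠ a := by
    rintro rfl
    simp at hab
  have hI : ((C.erase a).erase b).card + 2 = C.card := by
    rw [Finset.card_erase_of_mem (Finset.mem_erase.mpr ⟨hne, hb⟩), Finset.card_erase_of_mem ha]
    omega
  have hα : Fintype.card {i : Fin N // a i = b i} +
      (Finset.univ.filter fun i => a i ≠ b i).card = N := by
    rw [Fintype.card_subtype, Finset.card_filter_add_card_filter_not]
    simp
  refine ⟨_, card_mem_coverFreeLengths (α := {i : Fin N // a i = b i}) (s := t - 2) (by omega)
    ((C.erase a).erase b) (fun x => Finset.univ.filter fun i => x i ≠ a i) ?_ (by omega)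
    (by omega), by omega⟩
  intro x hx D hD hDt hcov
  simp only [Finset.mem_erase] at hx
  have hDC : ∀ y ∈ D, y ≠ x ∧ y ∈ C := fun y hy => by
    have := hD hy
    simp only [Finset.mem_erase] at this
    exact ⟨this.1, this.2.2.2⟩
  have hfp := hC (insert a (insert b D)) (by
      intro y hy
      simp only [Finset.mem_insert] at hy
      rcases hy with rfl | rfl | hy
      exacts [ha, hb, (hDC y hy).2])
    ((Finset.card_insert_le _ _).trans (by have := Finset.card_insert_le b D; omega))
  have hx' : x ∈ descSet (insert a (insert b D)) := by
    intro i
    by_cases hi : x i = a i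
    · exact ⟨a, by simp, hi⟩
    by_cases hiab : a i = b i
    · have h1 : (⟨i, hiab⟩ : {i : Fin N // a i = b i}) ∈
          Finset.univ.filter fun i : {i : Fin N // a i = b i} => x i ≠ a i := by simpa using hi
      obtain ⟨y, hy, hiy⟩ := Finset.mem_biUnion.mp (hcov h1)
      have hiy' : y i ≠ a i := by simpa using hiy
      exact ⟨y, by simp [hy], by omega⟩
    · exact ⟨b, by simp, by omega⟩
  have hmem : x ∈ (↑(insert a (insert b D)) : Set (Fin N → Fin 2)) := hfp ▸ ⟨hx', hx.2.2⟩
  simp only [Finset.coe_insert, Set.mem_insert_iff, Finset.mem_coe] at hmem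
  rcases hmem with h | h | h
  exacts [hx.2.1 h, hx.1 h, (hDC x h).1 rfl]

/-- For `t ≥ 3` the minima `N*(t-2)`, `N(t)`, `N*(t)` are attained and
`N*(t-2) ≤ N(t) ≤ N*(t)`. -/
theorem stmt_5 (t : ℕ) (ht : 3 ≤ t) :
    (coverFreeLengths (t - 2)).Nonempty ∧ (frameproofLengths t).Nonempty ∧
      (coverFreeLengths t).Nonempty ∧
      Nstar (t - 2) ≤ Nfp t ∧ Nfp t ≤ Nstar t := by
  have hcf : (coverFreeLengths t).Nonempty := coverFreeLengths_nonempty (by omega)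
  have hfp : (frameproofLengths t).Nonempty :=
    hcf.mono (coverFreeLengths_subset_frameproofLengths t)
  refine ⟨coverFreeLengths_nonempty (by omega), hfp, hcf, ?_, ?_⟩
  · obtain ⟨M, hM, hle⟩ := exists_mem_coverFreeLengths_le ht (Nat.sInf_mem hfp)
    exact (Nat.sInf_le hM).trans hle
  · exact Nat.sInf_le (coverFreeLengths_subset_frameproofLengths t (Nat.sInf_mem hcf))
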